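/- Let M be the output of the S-Greedy algorithm: scanning s₁,…,s_n in order, at node sᵢ, if some edge sᵢt ∈ E can be added to the current set keeping it a feasible d-distance matching, add the edge sᵢt_j with the smallest index j among such edges. Then 2|M| ≥ |M*| for every d-distance matching M* of G. -/

import Mathlib

open Finset

/-- `M` is a `d`-distance matching of the bipartite graph with left node set `Fin n`
(ordered) and right node set `Fin k` (indexed), whose edge set is `E`. -/
def DDM {n k : ℕ} (d : ℕ) (E M : Finset (Fin n × Fin k)) : Prop :=
  M ⊆ E ∧ (∀ e ∈ M, ∀ f ∈ M, e.1 = f.1 → e = f) ∧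
    (∀ e ∈ M, ∀ f ∈ M, e.2 = f.2 → e ≠ f → d ≤ Nat.dist e.1.val f.1.val)

open Classical in
/-- The `S`-greedy algorithm: scan the nodes of `S` in order; at node `s`, if some edge
`s t` can be added keeping feasibility, add the one with the smallest index of `t`. -/
noncomputable def sGreedy {n k : ℕ} (d : ℕ) (E : Finset (Fin n × Fin k)) :
    List (Fin n) → Finset (Fin n × Fin k) → Finset (Fin n × Fin k)
  | [], M => M
  | s :: rest, M =>
      sGreedy d E rest
        (if h : (Finset.univ.filter
            (fun t : Fin k => (s, t) ∈ E ∧ DDM d E (insert (s, t) M))).Nonempty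
         then insert (s, (Finset.univ.filter
            (fun t : Fin k => (s, t) ∈ E ∧ DDM d E (insert (s, t) M))).min' h) M
         else M)

/-!
Call an edge `uv` a blocker of `st` if `u = s`, or if `v = t` and `u` lies strictly before `s` at
distance less than `d`. Greedy scans `S` from left to right, so when it reaches `s` every conflict
with `st` comes from a blocker; hence in the end every edge of the graph has a blocker in the greedy
output. Conversely an edge `uv` blocks at most two edges of a `d`-distance matching: one at `u`, and
one at `v` in the window of `d - 1` nodes following `u`. Double counting gives the factor `2`.
-/

section

variable {n k d : ℕ} {E M : Finset (Fin n × Fin k)}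

/-- The edge `f` blocks the edge `e` if they share their node in `S`, or if they share their node
in `T` and `f` precedes `e` at distance less than `d`. The relation is one-sided, which makes
an edge block at most two, rather than three, edges of a `d`-distance matching. -/
def Blocks (d : ℕ) (f e : Fin n × Fin k) : Prop :=
  f.1 = e.1 ∨ f.2 = e.2 ∧ f.1 < e.1 ∧ e.1.val < f.1.val + d

instance : DecidableRel (Blocks (n := n) (k := k) d) :=
  fun _ _ => inferInstanceAs (Decidable (_ ∨ _))

namespace DDM

protected theorem empty : DDM d E ∅ := by simp [DDM]

protected theorem insert (hM : DDM d E M) {e : Fin n × Fin k} (he : e ∈ E)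
    (hfst : ∀ f ∈ M, f.1 ≠ e.1)
    (hdist : ∀ f ∈ M, f.2 = e.2 → d ≤ Nat.dist f.1.val e.1.val) : DDM d E (insert e M) := by
  obtain ⟨hsub, hinj, hfar⟩ := hM
  refine ⟨insert_subset he hsub, ?_, ?_⟩
  · simp only [forall_mem_insert]
    exact ⟨⟨fun _ => trivial, fun f hf h => absurd h.symm (hfst f hf)⟩,
      fun f hf => ⟨fun h => absurd h (hfst f hf), hinj f hf⟩⟩
  · simp only [forall_mem_insert]
    exact ⟨⟨fun _ h => absurd rfl h, fun f hf h _ => Nat.dist_comm _ _ ▸ hdist f hf h.symm⟩,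
      fun f hf => ⟨fun h _ => hdist f hf h, hfar f hf⟩⟩

theorem insert_of_forall_not_blocks (hM : DDM d E M) {e : Fin n × Fin k} (he : e ∈ E)
    (hle : ∀ f ∈ M, f.1 ≤ e.1) (hblocks : ∀ f ∈ M, ¬ Blocks d f e) :
    DDM d E (insert e M) := by
  have hfst : ∀ f ∈ M, f.1 ≠ e.1 := fun f hf h => hblocks f hf (.inl h)
  refine hM.insert he hfst fun f hf hsnd => ?_
  have hlt : f.1 < e.1 := (hle f hf).lt_of_ne (hfst f hf)
  have hgap : f.1.val + d ≤ e.1.val := not_lt.1 fun h => hblocks f hf (.inr ⟨hsnd, hlt, h⟩)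
  rw [Nat.dist_eq_sub_of_le hlt.le]
  exact Nat.le_sub_of_add_le' hgap

theorem card_filter_fst_eq_le_one (hM : DDM d E M) (s : Fin n) : #{e ∈ M | s = e.1} ≤ 1 := by
  simp only [card_le_one, mem_filter]
  exact fun e ⟨he, hse⟩ g ⟨hg, hsg⟩ => hM.2.1 e he g hg (hse.symm.trans hsg)

theorem card_filter_window_le_one (hM : DDM d E M) (f : Fin n × Fin k) :
    #{e ∈ M | f.2 = e.2 ∧ f.1 < e.1 ∧ e.1.val < f.1.val + d} ≤ 1 := by
  simp only [card_le_one, mem_filter]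
  intro e ⟨he, hfe, hlt_e, he_lt⟩ g ⟨hg, hfg, hlt_g, hg_lt⟩
  by_contra hne
  have hdist : d ≤ Nat.dist e.1.val g.1.val := hM.2.2 e he g hg (hfe.symm.trans hfg) hne
  simp only [Nat.dist] at hdist
  omega

theorem card_filter_blocks_le_two (hM : DDM d E M) (f : Fin n × Fin k) :
    #{e ∈ M | Blocks d f e} ≤ 2 :=
  calc
    #{e ∈ M | Blocks d f e}
        = #({e ∈ M | f.1 = e.1} ∪
            {e ∈ M | f.2 = e.2 ∧ f.1 < e.1 ∧ e.1.val < f.1.val + d}) :=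
      congrArg card (filter_or _ _ M)
    _ ≤ #{e ∈ M | f.1 = e.1} + #{e ∈ M | f.2 = e.2 ∧ f.1 < e.1 ∧ e.1.val < f.1.val + d} :=
      card_union_le _ _
    _ ≤ 1 + 1 :=
      add_le_add (hM.card_filter_fst_eq_le_one f.1) (hM.card_filter_window_le_one f)

theorem card_le_two_mul_card_of_forall_exists_blocks (hM : DDM d E M)
    {N : Finset (Fin n × Fin k)} (hN : ∀ e ∈ M, ∃ f ∈ N, Blocks d f e) : #M ≤ 2 * #N := by
  have hcount : #M * 1 ≤ #N * 2 :=
    card_mul_le_card_mul (fun e f => Blocks d f e)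
      (fun e he => card_pos.2 <| (hN e he).imp fun _ hf => mem_filter.2 hf)
      (fun f _ => hM.card_filter_blocks_le_two f)
  omega

end DDM

variable {s : Fin n} {l : List (Fin n)}

theorem sGreedy_cons_of_exists (h : ∃ t, DDM d E (insert (s, t) M)) :
    ∃ t, DDM d E (insert (s, t) M) ∧
      sGreedy d E (s :: l) M = sGreedy d E l (insert (s, t) M) := by
  classical
  have hne : ({t | (s, t) ∈ E ∧ DDM d E (insert (s, t) M)} : Finset (Fin k)).Nonempty := by
    obtain ⟨t, ht⟩ := h
    exact ⟨t, mem_filter.2 ⟨mem_univ t, ht.1 (mem_insert_self _ _), ht⟩⟩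
  refine ⟨_, (mem_filter.1 (min'_mem _ hne)).2.2, ?_⟩
  rw [sGreedy, dif_pos]

theorem sGreedy_cons_of_not_exists (h : ¬ ∃ t, DDM d E (insert (s, t) M)) :
    sGreedy d E (s :: l) M = sGreedy d E l M := by
  classical
  rw [sGreedy, dif_neg]
  exact fun ⟨t, ht⟩ => h ⟨t, (mem_filter.1 ht).2.2⟩

theorem subset_sGreedy (l : List (Fin n)) (M : Finset (Fin n × Fin k)) :
    M ⊆ sGreedy d E l M := by
  induction l generalizing M with
  | nil => exact Subset.refl M
  | cons s l ih =>
    by_cases hext : ∃ t, DDM d E (insert (s, t) M)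
    · obtain ⟨t, -, hstep⟩ := sGreedy_cons_of_exists (l := l) hext
      exact hstep ▸ (subset_insert _ _).trans (ih _)
    · exact sGreedy_cons_of_not_exists (l := l) hext ▸ ih M

theorem exists_mem_sGreedy_cons_blocks (hM : DDM d E M) (hle : ∀ f ∈ M, f.1 ≤ s)
    {t : Fin k} (hst : (s, t) ∈ E) : ∃ f ∈ sGreedy d E (s :: l) M, Blocks d f (s, t) := by
  by_cases hext : ∃ t, DDM d E (insert (s, t) M)
  · obtain ⟨t', -, hstep⟩ := sGreedy_cons_of_exists (l := l) hext
    exact ⟨(s, t'), hstep ▸ subset_sGreedy l _ (mem_insert_self _ _), .inl rfl⟩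
  · by_contra! hblocks
    exact hext ⟨t, hM.insert_of_forall_not_blocks hst hle
      fun f hf => hblocks f (subset_sGreedy _ M hf)⟩

theorem exists_mem_sGreedy_blocks (hl : l.Pairwise (· ≤ ·)) (hM : DDM d E M)
    (hle : ∀ f ∈ M, ∀ s ∈ l, f.1 ≤ s) {e : Fin n × Fin k} (he : e ∈ E) (hel : e.1 ∈ l) :
    ∃ f ∈ sGreedy d E l M, Blocks d f e := by
  induction l generalizing M with
  | nil => exact absurd hel List.not_mem_nil
  | cons s l ih =>
    obtain ⟨hsl, hl⟩ := List.pairwise_cons.1 hl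
    have hle_tail : ∀ f ∈ M, ∀ s ∈ l, f.1 ≤ s := fun f hf r hr =>
      hle f hf r (List.mem_cons_of_mem s hr)
    rcases List.mem_cons.1 hel with rfl | hel
    · exact exists_mem_sGreedy_cons_blocks hM (fun f hf => hle f hf _ List.mem_cons_self) he
    by_cases hext : ∃ t, DDM d E (insert (s, t) M)
    · obtain ⟨t, hM', hstep⟩ := sGreedy_cons_of_exists (l := l) hext
      exact hstep ▸ ih hl hM' (forall_mem_insert _ _ _ |>.2 ⟨hsl, hle_tail⟩) hel
    · exact sGreedy_cons_of_not_exists (l := l) hext ▸ ih hl hM hle_tail hel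

end

/-- `S`-Greedy is a 2-approximation algorithm for the unweighted `d`-distance matching
problem. -/
theorem stmt12 {n k : ℕ} (d : ℕ) (hd : 1 ≤ d) (E : Finset (Fin n × Fin k)) :
    ∀ Ms, DDM d E Ms → Ms.card ≤ 2 * (sGreedy d E (List.finRange n) ∅).card := by
  intro Ms hMs
  refine hMs.card_le_two_mul_card_of_forall_exists_blocks fun e he => ?_
  have hsorted : (List.finRange n).Pairwise (· ≤ ·) :=
    (List.pairwise_lt_finRange n).imp le_of_lt
  exact exists_mem_sGreedy_blocks hsorted DDM.empty (by simp) (hMs.1 he) (List.mem_finRange e.1)
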